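/- Let F be a field and n ≥ 3. The set S = {B_n, A_nB_n} is a generating set of the bicirculant algebra C_n(F), and its length satisfies l(S) ≥ n − 1; in fact dim_F L_{n−2}(S) ≤ 2(n−2) + 1 < dim_F C_n(F). -/

import Mathlib

/-- `Lk F S k` is the `F`-linear span of all products of at most `k` elements of `S`
(the empty product `1` has length `0`); equivalently `V ^ k` with `V = span F ({1} ∪ S)`. -/
noncomputable def Lk (F : Type*) [Field F] {A : Type*} [Ring A] [Algebra F A]
    (S : Set A) (k : ℕ) : Submodule F A :=
  (Submodule.span F ({1} ∪ S)) ^ k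

/-- The length of a generating set `S`: the least `k` with `Lk F S k = ⊤`. -/
noncomputable def lenS (F : Type*) [Field F] {A : Type*} [Ring A] [Algebra F A]
    (S : Set A) : ℕ :=
  sInf {k | Lk F S k = ⊤}

/-- `mAlg F A` is the maximal degree over all `τ ∈ A` of the minimal polynomial of `τ`. -/
noncomputable def mAlg (F A : Type*) [Field F] [Ring A] [Algebra F A] : ℕ :=
  sSup {d | ∃ τ : A, d = (minpoly F τ).natDegree}

/-- The circulant permutation matrix `A_n` (ones in positions `(i, i+1)` cyclically). -/
def Acirc (n : ℕ) (F : Type*) [Field F] : Matrix (Fin n) (Fin n) F :=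
  Matrix.of fun i j => if (j : ℕ) = ((i : ℕ) + 1) % n then 1 else 0

/-- The anti-circulant permutation matrix `B_n` (ones in positions `(i, n+1-i)`,
i.e. `i + j = n - 1` in 0-indexed coordinates). -/
def Bcirc (n : ℕ) (F : Type*) [Field F] : Matrix (Fin n) (Fin n) F :=
  Matrix.of fun i j => if (i : ℕ) + (j : ℕ) = n - 1 then 1 else 0

/-!
A product of two involutions `u`, `v` collapses to an alternating word, and there are `2 k + 1`
alternating words of length at most `k`; this bounds the dimension of `L_k` for `S = {B, A B}`.

The powers of `A` span the circulant matrices and their products with `B` span the anticirculant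
matrices `M i j = w (i + j)`; both spaces have dimension `n`. If `v (i - j) = w (i + j)` for all
`i` and `j`, then `v` is invariant under translation by `2 ℤ/n`, so the two spaces meet in dimension
at most `gcd n 2`, whence the algebra has dimension at least `2 n - gcd n 2 > 2 (n - 2) + 1`.
-/

open Module
open CoxeterSystem (alternatingWord alternatingWord_succ)
open Matrix (circulant)

/-! ### Words in two involutions -/

section AlternatingProducts

variable {M : Type*} [Monoid M] {u v : M}

/-- The alternating words in `u` and `v`, evaluated in the monoid and indexed by `ℤ`: the absolute
value of the index is the length of the word, and the word ends in `v` if the index is positive and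
in `u` if it is negative. With this indexing, right multiplication by `u` or by `v` is a reflection
of `ℤ`. -/
def altProd (u v : M) : ℤ → M
  | .ofNat k => (alternatingWord u v k).prod
  | .negSucc k => (alternatingWord v u (k + 1)).prod

lemma altProd_zero (u v : M) : altProd u v 0 = 1 := rfl

lemma altProd_neg (u v : M) (i : ℤ) : altProd u v (-i) = altProd v u i := by
  rcases i with (_ | k) | k <;> rfl

lemma altProd_mul_right (hv : v * v = 1) (i : ℤ) : altProd u v i * v = altProd u v (1 - i) := by
  rcases i with (_ | k) | k
  · simp [altProd, alternatingWord]
  · have hneg : (1 : ℤ) - Int.ofNat (k + 1) = -Int.ofNat k := by simp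
    rw [hneg, altProd_neg]
    simp [altProd, alternatingWord_succ, mul_assoc, hv]
  · have hsucc : (1 : ℤ) - Int.negSucc k = Int.ofNat (k + 2) := by grind
    rw [hsucc]
    simp [altProd, alternatingWord_succ, mul_assoc]

lemma altProd_mul_left (hu : u * u = 1) (i : ℤ) : altProd u v i * u = altProd u v (-1 - i) := by
  rw [← altProd_neg v u i, altProd_mul_right hu, ← altProd_neg]
  ring_nf

end AlternatingProducts

section Length

variable {F A : Type*} [Field F] [Ring A] [Algebra F A]

lemma Lk_le_span_altProd {u v : A} (hu : u * u = 1) (hv : v * v = 1) (k : ℕ) :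
    Lk F {u, v} k ≤ Submodule.span F (altProd u v '' Set.Icc (-k) k) := by
  induction k with
  | zero => simp [Lk, altProd_zero, Submodule.one_eq_span]
  | succ k ih =>
    calc Lk F {u, v} (k + 1) = Lk F {u, v} k * Submodule.span F ({1} ∪ {u, v}) := pow_succ _ _
      _ ≤ Submodule.span F (altProd u v '' Set.Icc (-k) k) * Submodule.span F ({1} ∪ {u, v}) := by
        gcongr
      _ ≤ Submodule.span F (altProd u v '' Set.Icc (-↑(k + 1)) ↑(k + 1)) := by
        rw [Submodule.span_mul_span]
        refine Submodule.span_mono ?_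
        rintro _ ⟨_, ⟨i, ⟨hki, hik⟩, rfl⟩, x, (rfl | rfl | rfl), rfl⟩
        · exact ⟨i, ⟨by grind, by grind⟩, (mul_one _).symm⟩
        · exact ⟨-1 - i, ⟨by grind, by grind⟩, (altProd_mul_left hu i).symm⟩
        · exact ⟨1 - i, ⟨by grind, by grind⟩, (altProd_mul_right hv i).symm⟩

lemma finrank_Lk_le {u v : A} (hu : u * u = 1) (hv : v * v = 1) (k : ℕ) :
    finrank F (Lk F {u, v} k) ≤ 2 * k + 1 := by
  classical
  have hspan : Lk F {u, v} k ≤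
      Submodule.span F ((Finset.Icc (-k : ℤ) k).image (altProd u v) : Set A) := by
    simpa using Lk_le_span_altProd hu hv k
  calc finrank F (Lk F {u, v} k) ≤ _ := Submodule.finrank_mono hspan
    _ ≤ ((Finset.Icc (-k : ℤ) k).image (altProd u v)).card := finrank_span_finset_le_card _
    _ ≤ (Finset.Icc (-k : ℤ) k).card := Finset.card_image_le
    _ = 2 * k + 1 := by rw [Int.card_Icc]; omega

lemma Lk_mono (S : Set A) : Monotone (Lk F S) := fun _ _ hij =>
  pow_le_pow_right' (Submodule.one_le.2 (Submodule.subset_span (Or.inl rfl))) hij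

lemma one_mem_Lk (S : Set A) (k : ℕ) : (1 : A) ∈ Lk F S k :=
  Lk_mono S k.zero_le (Submodule.one_le.1 (pow_zero _).ge)

lemma subset_Lk_one (S : Set A) : S ⊆ Lk F S 1 := fun _ hx => by
  rw [Lk, pow_one]
  exact Submodule.subset_span (Or.inr hx)

lemma mul_mem_Lk {S : Set A} {k l : ℕ} {x y : A} (hx : x ∈ Lk F S k) (hy : y ∈ Lk F S l) :
    x * y ∈ Lk F S (k + l) := by
  rw [Lk, pow_add]
  exact Submodule.mul_mem_mul hx hy

lemma exists_Lk_eq_top [FiniteDimensional F A] {S : Set A} (hS : Algebra.adjoin F S = ⊤) :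
    ∃ k, Lk F S k = ⊤ := by
  obtain ⟨N, hN⟩ : ∃ N, ∀ m ≥ N, Lk F S N = Lk F S m :=
    monotone_stabilizes_iff_noetherian.2 inferInstance ⟨Lk F S, Lk_mono S⟩
  let stable : Subalgebra F A := (Lk F S N).toSubalgebra (one_mem_Lk S N) fun _ _ hx hy => by
    rw [hN (N + N) (by omega)]
    exact mul_mem_Lk hx hy
  have hle : Algebra.adjoin F S ≤ stable := Algebra.adjoin_le fun x hx => by
    change x ∈ Lk F S N
    rw [hN (N + 1) (by omega)]
    exact Lk_mono S (by omega) (subset_Lk_one S hx)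
  exact ⟨N, eq_top_iff.2 fun x _ => hle (hS ▸ Algebra.mem_top)⟩

lemma lt_lenS_of_finrank_Lk_lt [FiniteDimensional F A] {S : Set A} (hS : Algebra.adjoin F S = ⊤)
    {k : ℕ} (hk : finrank F (Lk F S k) < finrank F A) : k < lenS F S := by
  by_contra! hle
  have htop : Lk F S (lenS F S) = ⊤ := Nat.sInf_mem (exists_Lk_eq_top hS)
  have hktop : Lk F S k = ⊤ := top_le_iff.1 (htop ▸ Lk_mono S hle)
  rw [hktop, finrank_top] at hk
  exact hk.false

end Length

section Adjoin

variable {R A : Type*} [CommSemiring R] [Semiring A] [Algebra R A]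

lemma adjoin_pair_mul_eq_adjoin_pair (a : A) {b : A} (hb : b * b = 1) :
    Algebra.adjoin R {b, a * b} = Algebra.adjoin R {a, b} := by
  apply le_antisymm <;> refine Algebra.adjoin_le ?_
  · have ha : a ∈ Algebra.adjoin R {a, b} := Algebra.subset_adjoin (by simp)
    have hmem : b ∈ Algebra.adjoin R {a, b} := Algebra.subset_adjoin (by simp)
    rintro _ (rfl | rfl)
    exacts [hmem, mul_mem ha hmem]
  · have hmem : b ∈ Algebra.adjoin R {b, a * b} := Algebra.subset_adjoin (by simp)
    have hab : a * b ∈ Algebra.adjoin R {b, a * b} := Algebra.subset_adjoin (by simp)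
    have ha : a ∈ Algebra.adjoin R {b, a * b} := by
      simpa only [mul_assoc, hb, mul_one] using mul_mem hab hmem
    rintro _ (rfl | rfl)
    exacts [ha, hmem]

lemma adjoin_subtype_pair_eq_top {a b : A} (ha : a ∈ Algebra.adjoin R {a, b})
    (hb : b ∈ Algebra.adjoin R {a, b}) :
    Algebra.adjoin R ({⟨a, ha⟩, ⟨b, hb⟩} : Set (Algebra.adjoin R {a, b})) = ⊤ := by
  rw [← Algebra.adjoin_adjoin_coe_preimage]
  congr 1
  ext x
  simp [Subtype.ext_iff]

end Adjoin

lemma range_le_of_forall_single_mem {R ι V : Type*} [Finite ι] [DecidableEq ι] [Semiring R]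
    [AddCommMonoid V] [Module R V] {f : (ι → R) →ₗ[R] V} {W : Submodule R V}
    (h : ∀ s, f (Pi.single s 1) ∈ W) : LinearMap.range f ≤ W := by
  have := Fintype.ofFinite ι
  rw [LinearMap.range_eq_map, ← (Pi.basisFun R ι).span_eq, Submodule.map_span_le]
  rintro _ ⟨s, rfl⟩
  simpa using h s

/-! ### Circulant and anticirculant matrices over a finite abelian group -/

section Circulant

/-- The anticirculant matrix with entries `v (i + j)`, the companion of `Matrix.circulant`. -/
def anticirculant {G α : Type*} [Add G] (v : G → α) : Matrix G G α :=
  Matrix.of fun i j => v (i + j)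

/-- `Matrix.circulant` as a linear map. -/
def circulantLinearMap (R G : Type*) [Semiring R] [Sub G] : (G → R) →ₗ[R] Matrix G G R where
  toFun := circulant
  map_add' _ _ := rfl
  map_smul' _ _ := rfl

/-- `anticirculant` as a linear map. -/
def anticirculantLinearMap (R G : Type*) [Semiring R] [Add G] : (G → R) →ₗ[R] Matrix G G R where
  toFun := anticirculant
  map_add' _ _ := rfl
  map_smul' _ _ := rfl

/-- The space of circulant matrices. -/
abbrev circulantSubmodule (R G : Type*) [Semiring R] [Sub G] : Submodule R (Matrix G G R) :=
  LinearMap.range (circulantLinearMap R G)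

/-- The space of anticirculant matrices. -/
abbrev anticirculantSubmodule (R G : Type*) [Semiring R] [Add G] : Submodule R (Matrix G G R) :=
  LinearMap.range (anticirculantLinearMap R G)

lemma anticirculant_injective {G α : Type*} [AddZeroClass G] :
    Function.Injective (anticirculant : (G → α) → Matrix G G α) := fun v w h =>
  funext fun i => by simpa [anticirculant] using congrFun (congrFun h i) 0

variable {G : Type*} [AddCommGroup G]

section Products

variable {m R : Type*} [Fintype G] [DecidableEq G] [Semiring R]

lemma circulant_single_mul_apply (a : G) (N : Matrix G m R) (i : G) (j : m) :
    (circulant (Pi.single a (1 : R)) * N) i j = N (i - a) j := by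
  have hcol (k : G) : i - k = a ↔ i - a = k := by grind
  simp [Matrix.mul_apply, Matrix.circulant_apply, Pi.single_apply, hcol]

lemma anticirculant_single_mul_apply (a : G) (N : Matrix G m R) (i : G) (j : m) :
    (anticirculant (Pi.single a (1 : R)) * N) i j = N (a - i) j := by
  simp [Matrix.mul_apply, anticirculant, Pi.single_apply, ← eq_sub_iff_add_eq']

lemma circulant_single_mul_circulant_single (a b : G) :
    circulant (Pi.single a (1 : R)) * circulant (Pi.single b 1) =
      circulant (Pi.single (a + b) 1) := by
  ext i j
  simp only [circulant_single_mul_apply, Matrix.circulant_apply, Pi.single_apply]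
  congr 1
  grind

lemma circulant_single_mul_anticirculant_single (a b : G) :
    circulant (Pi.single a (1 : R)) * anticirculant (Pi.single b 1) =
      anticirculant (Pi.single (a + b) 1) := by
  ext i j
  simp only [circulant_single_mul_apply, anticirculant, Matrix.of_apply, Pi.single_apply]
  congr 1
  grind

lemma anticirculant_single_mul_self (a : G) :
    anticirculant (Pi.single a (1 : R)) * anticirculant (Pi.single a 1) = 1 := by
  ext i j
  rw [anticirculant_single_mul_apply]
  simp only [anticirculant, Matrix.of_apply, Pi.single_apply, Matrix.one_apply]
  congr 1
  grind

lemma circulant_single_pow (a : G) (k : ℕ) :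
    circulant (Pi.single a (1 : R)) ^ k = circulant (Pi.single (k • a) 1) := by
  induction k with
  | zero => simp
  | succ k ih => rw [pow_succ, ih, circulant_single_mul_circulant_single, succ_nsmul]

end Products

section Generation

variable {R : Type*} [CommSemiring R] [Fintype G] [DecidableEq G] {a : G}

lemma circulant_single_mem_adjoin (ha : ∀ s, s ∈ AddSubmonoid.multiples a) (b s : G) :
    circulant (Pi.single s 1) ∈ Algebra.adjoin R
      {circulant (Pi.single a (1 : R)), anticirculant (Pi.single b 1)} := by
  obtain ⟨k, rfl⟩ := ha s
  rw [← circulant_single_pow]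
  exact pow_mem (Algebra.subset_adjoin (by simp)) k

lemma anticirculant_single_mem_adjoin (ha : ∀ s, s ∈ AddSubmonoid.multiples a) (b s : G) :
    anticirculant (Pi.single s 1) ∈ Algebra.adjoin R
      {circulant (Pi.single a (1 : R)), anticirculant (Pi.single b 1)} := by
  rw [← sub_add_cancel s b, ← circulant_single_mul_anticirculant_single]
  exact mul_mem (circulant_single_mem_adjoin ha b (s - b)) (Algebra.subset_adjoin (by simp))

end Generation

section Rank

variable {R : Type*} [Semiring R]

lemma finrank_circulantSubmodule [StrongRankCondition R] [Finite G] :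
    finrank R (circulantSubmodule R G) = Nat.card G := by
  have := Fintype.ofFinite G
  rw [LinearMap.finrank_range_of_inj Matrix.circulant_injective, finrank_fintype_fun_eq_card,
    Nat.card_eq_fintype_card]

lemma finrank_anticirculantSubmodule [StrongRankCondition R] [Finite G] :
    finrank R (anticirculantSubmodule R G) = Nat.card G := by
  have := Fintype.ofFinite G
  rw [LinearMap.finrank_range_of_inj anticirculant_injective, finrank_fintype_fun_eq_card,
    Nat.card_eq_fintype_card]

lemma circulantSubmodule_inf_anticirculantSubmodule_le :
    circulantSubmodule R G ⊓ anticirculantSubmodule R G ≤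
      LinearMap.range (circulantLinearMap R G ∘ₗ LinearMap.funLeft R R
        (QuotientAddGroup.mk (s := (nsmulAddMonoidHom (α := G) 2).range))) := by
  rintro _ ⟨⟨v, rfl⟩, w, hw⟩
  have hvw (i j : G) : w (i + j) = v (i - j) := congrFun (congrFun hw i) j
  have hperiodic (x y : G) : v (x + 2 • y) = v x := by
    calc v (x + 2 • y) = v (x + y - -y) := by congr 1; abel
      _ = w (x + y + -y) := (hvw _ _).symm
      _ = w (x + 0) := by congr 1; abel
      _ = v x := by rw [hvw, sub_zero]
  refine ⟨fun q => v q.out, congrArg (circulantLinearMap R G) (funext fun x => ?_)⟩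
  obtain ⟨⟨_, y, rfl⟩, hy⟩ :=
    QuotientAddGroup.mk_out_eq_add (nsmulAddMonoidHom (α := G) 2).range x
  simpa [LinearMap.funLeft, hy] using hperiodic x y

end Rank

section Dimension

variable {F : Type*} [Field F]

lemma finrank_circulant_inf_anticirculant_le [Finite G] [IsAddCyclic G] :
    finrank F ↥(circulantSubmodule F G ⊓ anticirculantSubmodule F G) ≤ (Nat.card G).gcd 2 := by
  have := Fintype.ofFinite (G ⧸ (nsmulAddMonoidHom (α := G) 2).range)
  calc _ ≤ _ := Submodule.finrank_mono circulantSubmodule_inf_anticirculantSubmodule_le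
    _ ≤ finrank F (G ⧸ (nsmulAddMonoidHom (α := G) 2).range → F) := LinearMap.finrank_range_le _
    _ = (nsmulAddMonoidHom (α := G) 2).range.index := by
      rw [finrank_fintype_fun_eq_card, ← Nat.card_eq_fintype_card]; rfl
    _ = (Nat.card G).gcd 2 := IsAddCyclic.index_nsmulAddMonoidHom_range G 2

lemma two_mul_card_le_finrank_adjoin_add_gcd [Fintype G] [DecidableEq G] {a : G}
    (ha : ∀ s, s ∈ AddSubmonoid.multiples a) (b : G) :
    2 * Nat.card G ≤ finrank F (Algebra.adjoin F
      {circulant (Pi.single a (1 : F)), anticirculant (Pi.single b 1)}) + (Nat.card G).gcd 2 := by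
  have : IsAddCyclic G := ⟨a, fun s => by
    obtain ⟨k, rfl⟩ := ha s
    exact ⟨k, natCast_zsmul a k⟩⟩
  set C := Algebra.adjoin F {circulant (Pi.single a (1 : F)), anticirculant (Pi.single b 1)}
  have hsup : circulantSubmodule F G ⊔ anticirculantSubmodule F G ≤ Subalgebra.toSubmodule C :=
    sup_le (range_le_of_forall_single_mem (circulant_single_mem_adjoin ha b))
      (range_le_of_forall_single_mem (anticirculant_single_mem_adjoin ha b))
  calc 2 * Nat.card G
      = finrank F ↥(circulantSubmodule F G ⊔ anticirculantSubmodule F G) +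
          finrank F ↥(circulantSubmodule F G ⊓ anticirculantSubmodule F G) := by
        rw [Submodule.finrank_sup_add_finrank_inf_eq, finrank_circulantSubmodule,
          finrank_anticirculantSubmodule, two_mul]
    _ ≤ finrank F C + (Nat.card G).gcd 2 :=
        add_le_add (Submodule.finrank_mono hsup) finrank_circulant_inf_anticirculant_le

end Dimension

end Circulant

section Bicirculant

variable {n : ℕ} [NeZero n] {F : Type*} [Field F]

lemma Acirc_eq_circulant : Acirc n F = circulant (Pi.single (-1) 1) := by
  ext i j
  have hij : (j : ℕ) = (i + 1) % n ↔ i - j = -1 := by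
    rw [sub_eq_iff_eq_add, neg_add_eq_sub, eq_sub_iff_add_eq, eq_comm, Fin.ext_iff, Fin.val_add,
      Fin.val_one', Nat.add_mod_mod]
  simp only [Acirc, Matrix.of_apply, Matrix.circulant_apply, Pi.single_apply, hij]

lemma Bcirc_eq_anticirculant : Bcirc n F = anticirculant (Pi.single (-1) 1) := by
  obtain ⟨m, rfl⟩ := Nat.exists_eq_add_one_of_ne_zero (NeZero.ne n)
  ext i j
  have hij : (i : ℕ) + j = m + 1 - 1 ↔ i + j = -1 := by
    rw [← Fin.neg_last, neg_neg, ← eq_sub_iff_add_eq', Fin.last_sub, Fin.ext_iff, Fin.val_rev]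
    omega
  simp only [Bcirc, anticirculant, Matrix.of_apply, Pi.single_apply, hij]

open Fin.CommRing in
lemma mem_multiples_neg_one (s : Fin n) : s ∈ AddSubmonoid.multiples (-1 : Fin n) :=
  ⟨(-s : Fin n), by simp⟩

lemma Bcirc_mul_self : Bcirc n F * Bcirc n F = 1 := by
  rw [Bcirc_eq_anticirculant, anticirculant_single_mul_self]

lemma Acirc_mul_Bcirc_mul_self :
    Acirc n F * Bcirc n F * (Acirc n F * Bcirc n F) = 1 := by
  rw [Acirc_eq_circulant, Bcirc_eq_anticirculant, circulant_single_mul_anticirculant_single,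
    anticirculant_single_mul_self]

lemma two_mul_le_finrank_bicirculant_add_gcd :
    2 * n ≤ finrank F (Algebra.adjoin F {Acirc n F, Bcirc n F}) + n.gcd 2 := by
  rw [Acirc_eq_circulant, Bcirc_eq_anticirculant]
  simpa using two_mul_card_le_finrank_adjoin_add_gcd (F := F) mem_multiples_neg_one (-1 : Fin n)

end Bicirculant

theorem stmt_7 (F : Type*) [Field F] (n : ℕ) (hn : 3 ≤ n) :
    ∃ u v : ↥(Algebra.adjoin F ({Acirc n F, Bcirc n F} : Set (Matrix (Fin n) (Fin n) F))),
      (u : Matrix (Fin n) (Fin n) F) = Bcirc n F ∧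
      (v : Matrix (Fin n) (Fin n) F) = Acirc n F * Bcirc n F ∧
      Algebra.adjoin F {u, v} = ⊤ ∧
      n - 1 ≤ lenS F {u, v} ∧
      Module.finrank F (Lk F {u, v} (n - 2)) ≤ 2 * (n - 2) + 1 ∧
      2 * (n - 2) + 1 <
        Module.finrank F
          ↥(Algebra.adjoin F ({Acirc n F, Bcirc n F} : Set (Matrix (Fin n) (Fin n) F))) := by
  have : NeZero n := ⟨by omega⟩
  have hA : Acirc n F ∈ Algebra.adjoin F {Acirc n F, Bcirc n F} :=
    Algebra.subset_adjoin (by simp)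
  have hB : Bcirc n F ∈ Algebra.adjoin F {Acirc n F, Bcirc n F} :=
    Algebra.subset_adjoin (by simp)
  let a : Algebra.adjoin F {Acirc n F, Bcirc n F} := ⟨Acirc n F, hA⟩
  let b : Algebra.adjoin F {Acirc n F, Bcirc n F} := ⟨Bcirc n F, hB⟩
  have hb : b * b = 1 := Subtype.ext Bcirc_mul_self
  have hab : a * b * (a * b) = 1 := Subtype.ext Acirc_mul_Bcirc_mul_self
  have hgen : Algebra.adjoin F {b, a * b} = ⊤ :=
    (adjoin_pair_mul_eq_adjoin_pair a hb).trans (adjoin_subtype_pair_eq_top hA hB)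
  have hL : finrank F (Lk F {b, a * b} (n - 2)) ≤ 2 * (n - 2) + 1 := finrank_Lk_le hb hab (n - 2)
  have hdim : 2 * (n - 2) + 1 < finrank F (Algebra.adjoin F {Acirc n F, Bcirc n F}) := by
    have hlower := two_mul_le_finrank_bicirculant_add_gcd (n := n) (F := F)
    have hgcd : n.gcd 2 ≤ 2 := Nat.gcd_le_right n two_pos
    omega
  have hlen : n - 2 < lenS F {b, a * b} := lt_lenS_of_finrank_Lk_lt hgen (hL.trans_lt hdim)
  exact ⟨b, a * b, rfl, rfl, hgen, by omega, hL, hdim⟩
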